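/- Let u, v, w ∈ ℝ³ be linearly independent vectors and let x, y ∈ par(u, v, w). Then |det[u|x|y]| < |det[u|v|w]|, i.e., vol(u, x, y) < vol(u, v, w). -/

import Mathlib

/-!
Write `x = a u + b v + c w` and `y = a' u + b' v + c' w`. Since the determinant is multilinear and
alternating, `det[u|x|y] = (b c' - c b') det[u|v|w]` (`det_colMatrix_combination`). The coefficients
lie in `[0, 1)`, hence so do `b c'` and `c b'`, and their difference has absolute value less than
`1`. Linear independence makes `det[u|v|w]` nonzero, so the inequality is strict.
-/

open Matrix

/-- `par(u, v, w)`: the half-open parallelepiped spanned by `u, v, w`. -/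
def par3 (u v w : Fin 3 → ℝ) : Set (Fin 3 → ℝ) :=
  {p | ∃ a b c : ℝ, 0 ≤ a ∧ a < 1 ∧ 0 ≤ b ∧ b < 1 ∧ 0 ≤ c ∧ c < 1 ∧
    p = a • u + b • v + c • w}

/-- The 3×3 matrix whose columns are `u, v, w`. -/
def colMatrix (u v w : Fin 3 → ℝ) : Matrix (Fin 3) (Fin 3) ℝ :=
  (Matrix.of ![u, v, w])ᵀ

theorem det_colMatrix_combination (u v w : Fin 3 → ℝ) (a b c a' b' c' : ℝ) :
    (colMatrix u (a • u + b • v + c • w) (a' • u + b' • v + c' • w)).det =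
      (b * c' - c * b') * (colMatrix u v w).det := by
  simp [colMatrix, Matrix.det_fin_three]
  ring

theorem det_colMatrix_ne_zero {u v w : Fin 3 → ℝ} (h : LinearIndependent ℝ ![u, v, w]) :
    (colMatrix u v w).det ≠ 0 := by
  rw [colMatrix, Matrix.det_transpose]
  have hu : IsUnit (Matrix.of ![u, v, w]) := Matrix.linearIndependent_rows_iff_isUnit.mp h
  exact ((Matrix.isUnit_iff_isUnit_det _).mp hu).ne_zero

/-- if `u, v, w ∈ ℝ³` are linearly independent and
`x, y ∈ par(u, v, w)`, then `vol(u, x, y) < vol(u, v, w)`. -/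
theorem vol_lt_of_mem_par (u v w x y : Fin 3 → ℝ)
    (h : LinearIndependent ℝ ![u, v, w])
    (hx : x ∈ par3 u v w) (hy : y ∈ par3 u v w) :
    |(colMatrix u x y).det| < |(colMatrix u v w).det| := by
  obtain ⟨a, b, c, -, -, hb0, hb1, hc0, hc1, rfl⟩ := hx
  obtain ⟨a', b', c', -, -, hb0', hb1', hc0', hc1', rfl⟩ := hy
  rw [det_colMatrix_combination, abs_mul]
  have hbc : |b * c' - c * b'| < 1 :=
    abs_sub_lt_of_nonneg_of_lt (mul_nonneg hb0 hc0')
      (mul_lt_one_of_nonneg_of_lt_one_left hb0 hb1 hc1'.le)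
      (mul_nonneg hc0 hb0') (mul_lt_one_of_nonneg_of_lt_one_left hc0 hc1 hb1'.le)
  exact mul_lt_of_lt_one_left (abs_pos.mpr (det_colMatrix_ne_zero h)) hbc
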